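/- arXiv:2007.11287 — 7 statements merged into one kernel-verified Lean document; each statement's English description precedes it below -/
import Mathlib

section
/- The SCA weight admits a product formula: for every spin configuration σ ∈ Ω and every β ≥ 0, w(σ) := Σ_{τ∈Ω} e^{−β H̃(σ,τ)} = Π_{x∈V} 2 e^{(β/2) h_x σ_x} cosh((β/2)(h̃_x(σ) + q_x σ_x)). -/
open Real Finset

/-- Spin configurations: `Ω = {-1,+1}^V`. -/
abbrev Conf (V : Type*) := V → ({-1, 1} : Finset ℝ)

instance {V : Type*} : Nonempty (Conf V) := ⟨fun _ => ⟨1, by simp⟩⟩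

/-- Flip a single spin value. -/
noncomputable def spinFlip (s : ({-1, 1} : Finset ℝ)) : ({-1, 1} : Finset ℝ) :=
  ⟨-(s : ℝ), by
    have hs := s.2
    simp only [Finset.mem_insert, Finset.mem_singleton] at hs ⊢
    rcases hs with h | h <;> simp [h]⟩

/-- `σ^x`: the configuration `σ` with the spin at `x` flipped. -/
noncomputable def confFlip {V : Type*} [DecidableEq V] (σ : Conf V) (x : V) : Conf V :=
  Function.update σ x (spinFlip (σ x))

/-- `D_{σ,τ}`: the set of vertices at which `σ` and `τ` disagree. -/
noncomputable def Dset {V : Type*} [Fintype V] (σ τ : Conf V) : Finset V :=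
  Finset.univ.filter fun x => (σ x : ℝ) ≠ (τ x : ℝ)

/-- The cavity field `h̃_x(σ) = Σ_y J_{x,y} σ_y + h_x`. -/
noncomputable def cavity {V : Type*} [Fintype V] (J : V → V → ℝ) (h : V → ℝ)
    (σ : Conf V) (x : V) : ℝ :=
  (∑ y, J x y * (σ y : ℝ)) + h x

/-- The extended Hamiltonian `H̃(σ,τ)`. -/
noncomputable def Htilde {V : Type*} [Fintype V] (J : V → V → ℝ) (h q : V → ℝ)
    (σ τ : Conf V) : ℝ :=
  -(1/2) * ∑ x, ∑ y, J x y * (σ x : ℝ) * (τ y : ℝ)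
    - (1/2) * ∑ x, h x * ((σ x : ℝ) + (τ x : ℝ))
    - (1/2) * ∑ x, q x * (σ x : ℝ) * (τ x : ℝ)

/-- The Ising Hamiltonian `H(σ)`. -/
noncomputable def Hamil {V : Type*} [Fintype V] (J : V → V → ℝ) (h : V → ℝ)
    (σ : Conf V) : ℝ :=
  -(1/2) * ∑ x, ∑ y, J x y * (σ x : ℝ) * (σ y : ℝ) - ∑ x, h x * (σ x : ℝ)

/-- The SCA weight `w(σ) = Σ_τ e^{-β H̃(σ,τ)}`. -/
noncomputable def wSCA {V : Type*} [Fintype V] [DecidableEq V] (J : V → V → ℝ)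
    (h q : V → ℝ) (β : ℝ) (σ : Conf V) : ℝ :=
  ∑ τ : Conf V, Real.exp (-β * Htilde J h q σ τ)

/-- The SCA transition probability `P^SCA_{β,q}(σ,τ)`. -/
noncomputable def PSCA {V : Type*} [Fintype V] [DecidableEq V] (J : V → V → ℝ)
    (h q : V → ℝ) (β : ℝ) (σ τ : Conf V) : ℝ :=
  Real.exp (-β * Htilde J h q σ τ) / wSCA J h q β σ

/-- The SCA equilibrium distribution `π^SCA_{β,q}`. -/
noncomputable def piSCA {V : Type*} [Fintype V] [DecidableEq V] (J : V → V → ℝ)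
    (h q : V → ℝ) (β : ℝ) (σ : Conf V) : ℝ :=
  wSCA J h q β σ / ∑ τ : Conf V, wSCA J h q β τ

/-- Total-variation distance between two measures on `Ω`. -/
noncomputable def tvDist {V : Type*} [Fintype V] [DecidableEq V]
    (μ ν : Conf V → ℝ) : ℝ :=
  (1/2) * ∑ σ : Conf V, |μ σ - ν σ|

/-- Summing over a single spin: `∑_{s = ±1} e^{a s} = 2 cosh a`. -/
theorem sum_spin_exp_mul (a : ℝ) :
    ∑ s : ({-1, 1} : Finset ℝ), Real.exp (a * (s : ℝ)) = 2 * Real.cosh a := by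
  rw [Finset.sum_coe_sort ({-1, 1} : Finset ℝ) (fun s => Real.exp (a * s)),
    Finset.sum_pair (by norm_num), Real.cosh_eq]
  simp only [mul_neg, mul_one]
  ring

/-- For symmetric `J`, the extended Hamiltonian is a sum of terms each involving a single spin
of `τ`. -/
theorem neg_mul_Htilde_eq_sum {V : Type*} [Fintype V] (J : V → V → ℝ)
    (hJsym : ∀ x y, J x y = J y x) (h q : V → ℝ) (β : ℝ) (σ τ : Conf V) :
    -β * Htilde J h q σ τ
      = ∑ x, (β / 2 * h x * (σ x : ℝ)
          + β / 2 * (cavity J h σ x + q x * (σ x : ℝ)) * (τ x : ℝ)) := by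
  have interaction : ∑ x, ∑ y, J x y * (σ x : ℝ) * (τ y : ℝ)
      = ∑ x, (∑ y, J x y * (σ y : ℝ)) * (τ x : ℝ) := by
    rw [Finset.sum_comm]
    refine Finset.sum_congr rfl fun x _ => ?_
    rw [Finset.sum_mul]
    exact Finset.sum_congr rfl fun y _ => by rw [hJsym y x]
  unfold Htilde cavity
  rw [interaction, mul_sub, mul_sub]
  simp only [Finset.mul_sum, ← Finset.sum_sub_distrib]
  refine Finset.sum_congr rfl fun x _ => ?_
  ring

/-- product formula for the SCA weight. -/
theorem sca_weight_product_formula {V : Type*} [Fintype V] [DecidableEq V]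
    (J : V → V → ℝ) (hJsym : ∀ x y, J x y = J y x) (hJdiag : ∀ x, J x x = 0)
    (h q : V → ℝ) (hq : ∀ x, 0 ≤ q x) (β : ℝ) (hβ : 0 ≤ β) (σ : Conf V) :
    wSCA J h q β σ
      = ∏ x, 2 * Real.exp (β / 2 * h x * (σ x : ℝ))
          * Real.cosh (β / 2 * (cavity J h σ x + q x * (σ x : ℝ))) := by
  calc
    wSCA J h q β σ
      = ∑ τ : Conf V, ∏ x, Real.exp (β / 2 * h x * (σ x : ℝ)
          + β / 2 * (cavity J h σ x + q x * (σ x : ℝ)) * (τ x : ℝ)) := by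
        simp only [wSCA, neg_mul_Htilde_eq_sum J hJsym, Real.exp_sum]
    _ = ∏ x, ∑ s : ({-1, 1} : Finset ℝ), Real.exp (β / 2 * h x * (σ x : ℝ)
          + β / 2 * (cavity J h σ x + q x * (σ x : ℝ)) * (s : ℝ)) := by
        rw [Finset.prod_univ_sum, Fintype.piFinset_univ]
    _ = _ := by
        refine Finset.prod_congr rfl fun x _ => ?_
        simp only [Real.exp_add, ← Finset.mul_sum, sum_spin_exp_mul]
        ring
end

section
/- For all real numbers a and b, |tanh(a+b) − tanh(a−b)| ≤ 2 tanh|b|. -/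
theorem cosh_add_mul_cosh_sub (a b : ℝ) :
    Real.cosh (a + b) * Real.cosh (a - b) = Real.cosh b ^ 2 + Real.sinh a ^ 2 := by
  rw [Real.cosh_add, Real.cosh_sub]
  linear_combination Real.cosh b ^ 2 * Real.cosh_sq a - Real.sinh a ^ 2 * Real.sinh_sq b

theorem tanh_add_sub_tanh_sub (a b : ℝ) :
    Real.tanh (a + b) - Real.tanh (a - b) =
      2 * Real.sinh b * Real.cosh b / (Real.cosh b ^ 2 + Real.sinh a ^ 2) := by
  rw [Real.tanh_eq_sinh_div_cosh, Real.tanh_eq_sinh_div_cosh,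
    div_sub_div _ _ (Real.cosh_pos _).ne' (Real.cosh_pos _).ne', cosh_add_mul_cosh_sub,
    ← Real.sinh_sub, ← Real.sinh_two_mul]
  ring_nf

/-- for all real `a`, `b`, `|tanh(a+b) − tanh(a−b)| ≤ 2 tanh |b|`. -/
theorem abs_tanh_add_sub_tanh_sub_le (a b : ℝ) :
    |Real.tanh (a + b) - Real.tanh (a - b)| ≤ 2 * Real.tanh |b| := by
  have hc := Real.cosh_pos b
  have hs : 0 ≤ |Real.sinh b| := abs_nonneg _
  rw [tanh_add_sub_tanh_sub, Real.tanh_eq_sinh_div_cosh, Real.cosh_abs, ← Real.abs_sinh,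
    abs_div, abs_mul, abs_mul, abs_of_pos hc, abs_two,
    abs_of_pos (show 0 < Real.cosh b ^ 2 + Real.sinh a ^ 2 by positivity), ← mul_div_assoc,
    div_le_div_iff₀ (by positivity) hc]
  nlinarith [mul_nonneg hs (sq_nonneg (Real.sinh a))]
end

section
/- (Theorem 2.1, contraction estimate) For any nonnegative pinning parameters q, if β is small enough that r := max_{x∈V} ( tanh(βq_x/2) + Σ_{y∈V} tanh(β|J_{x,y}|/2) ) < 1, then for all σ, τ ∈ Ω the transportation metric between one-step SCA distributions satisfies ρ_TM(P^SCA_{β,q}(σ,·), P^SCA_{β,q}(τ,·)) ≤ r·|D_{σ,τ}|, where D_{σ,τ} = {x ∈ V : σ_x ≠ τ_x}. -/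
open Real Finset

/-- The transportation metric `ρ_TM(μ,ν)`: the infimum over couplings `γ` of
the expected size of the disagreement set. -/
noncomputable def rhoTM {V : Type*} [Fintype V] [DecidableEq V]
    (μ ν : Conf V → ℝ) : ℝ :=
  sInf { e : ℝ | ∃ γ : Conf V × Conf V → ℝ, (∀ p, 0 ≤ γ p) ∧
      (∀ σ, ∑ τ : Conf V, γ (σ, τ) = μ σ) ∧
      (∀ τ, ∑ σ : Conf V, γ (σ, τ) = ν τ) ∧
      e = ∑ p : Conf V × Conf V, γ p * ((Dset p.1 p.2).card : ℝ) }

namespace Real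

theorem tanh_sub_eq (a b : ℝ) : tanh a - tanh b = sinh (a - b) / (cosh a * cosh b) := by
  rw [tanh_eq_sinh_div_cosh, tanh_eq_sinh_div_cosh, sinh_sub,
    div_sub_div _ _ (cosh_pos a).ne' (cosh_pos b).ne']

theorem tanh_le_tanh_of_le {a b : ℝ} (hab : a ≤ b) : tanh a ≤ tanh b := by
  have hsub := tanh_sub_eq b a
  have : 0 ≤ sinh (b - a) / (cosh b * cosh a) :=
    div_nonneg (sinh_nonneg_iff.2 (sub_nonneg.2 hab))
      (mul_pos (cosh_pos b) (cosh_pos a)).le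
  linarith

theorem tanh_add_le {a b : ℝ} (ha : 0 ≤ a) (hb : 0 ≤ b) :
    tanh (a + b) ≤ tanh a + tanh b := by
  have hsum : tanh a + tanh b = sinh (a + b) / (cosh a * cosh b) := by
    simpa using tanh_sub_eq a (-b)
  rw [hsum, tanh_eq_sinh_div_cosh, cosh_add]
  have hs : 0 ≤ sinh a * sinh b := mul_nonneg (sinh_nonneg_iff.2 ha) (sinh_nonneg_iff.2 hb)
  exact div_le_div_of_nonneg_left (sinh_nonneg_iff.2 (add_nonneg ha hb))
    (mul_pos (cosh_pos a) (cosh_pos b)) (by linarith)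

theorem tanh_sum_le {ι : Type*} (s : Finset ι) (f : ι → ℝ) (hf : ∀ i ∈ s, 0 ≤ f i) :
    tanh (∑ i ∈ s, f i) ≤ ∑ i ∈ s, tanh (f i) :=
  Finset.le_sum_of_subadditive_on_pred tanh (fun x => 0 ≤ x) (by simp)
    (fun _ _ => tanh_add_le) (fun _ _ => add_nonneg) f hf

theorem cosh_half_sub_sq_le (a b : ℝ) : cosh ((a - b) / 2) ^ 2 ≤ cosh a * cosh b := by
  have ha : cosh a = cosh ((a + b) / 2 + (a - b) / 2) := by ring_nf
  have hb : cosh b = cosh ((a + b) / 2 - (a - b) / 2) := by ring_nf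
  rw [ha, hb, cosh_add, cosh_sub]
  have hm := cosh_sq ((a + b) / 2)
  have hk := cosh_sq ((a - b) / 2)
  nlinarith [sq_nonneg (sinh ((a + b) / 2))]

theorem abs_tanh_sub_tanh_le (a b : ℝ) : |tanh a - tanh b| ≤ 2 * tanh (|a - b| / 2) := by
  wlog hab : b ≤ a generalizing a b
  · rw [abs_sub_comm, abs_sub_comm a b]
    exact this b a (le_of_not_ge hab)
  rw [abs_of_nonneg (sub_nonneg.2 (tanh_le_tanh_of_le hab)), abs_of_nonneg (sub_nonneg.2 hab),
    tanh_sub_eq, tanh_eq_sinh_div_cosh]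
  have hdouble : sinh (a - b) = 2 * sinh ((a - b) / 2) * cosh ((a - b) / 2) := by
    rw [← sinh_two_mul]; ring_nf
  have hc := cosh_pos ((a - b) / 2)
  have hs : 0 ≤ sinh ((a - b) / 2) := sinh_nonneg_iff.2 (by linarith)
  calc sinh (a - b) / (cosh a * cosh b)
      ≤ sinh (a - b) / cosh ((a - b) / 2) ^ 2 :=
        div_le_div_of_nonneg_left (sinh_nonneg_iff.2 (sub_nonneg.2 hab)) (by positivity)
          (cosh_half_sub_sq_le a b)
    _ = 2 * (sinh ((a - b) / 2) / cosh ((a - b) / 2)) := by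
        rw [hdouble]; field_simp

end Real

theorem Fintype.sum_pi_prod {ι R : Type*} {κ : ι → Type*} [Fintype ι] [DecidableEq ι]
    [∀ i, Fintype (κ i)] [CommSemiring R] (f : ∀ i, κ i → R) :
    ∑ x : ∀ i, κ i, ∏ i, f i (x i) = ∏ i, ∑ j, f i j := by
  rw [Finset.prod_univ_sum, Fintype.piFinset_univ]

/-- A sum over pairs of functions of a product over coordinates factorizes. -/
theorem Fintype.sum_prod_pi_prod {ι κ R : Type*} [Fintype ι] [DecidableEq ι] [Fintype κ]
    [CommSemiring R] (f : ι → κ → κ → R) :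
    ∑ p : (ι → κ) × (ι → κ), ∏ i, f i (p.1 i) (p.2 i) = ∏ i, ∑ s, ∑ t, f i s t := by
  rw [← Equiv.sum_comp (Equiv.arrowProdEquivProdArrow ι (fun _ => κ) (fun _ => κ))]
  simp only [← Fintype.sum_prod_type']
  exact Fintype.sum_pi_prod fun i (p : κ × κ) => f i p.1 p.2

/-- The type of spin values. -/
abbrev Spin := (({-1, 1} : Finset ℝ) : Type)

theorem spin_eq (s : Spin) : s = ⟨-1, by simp⟩ ∨ s = ⟨1, by simp⟩ := by
  obtain ⟨s, hs⟩ := s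
  simpa using hs

theorem sum_spin (f : Spin → ℝ) :
    ∑ s : Spin, f s = f ⟨-1, by simp⟩ + f ⟨1, by simp⟩ := by
  have huniv : (Finset.univ : Finset Spin) = {⟨-1, by simp⟩, ⟨1, by simp⟩} := by
    refine (Finset.eq_univ_iff_forall.2 fun s => ?_).symm
    rcases spin_eq s with rfl | rfl <;> simp
  rw [huniv, Finset.sum_pair (by rw [Ne, Subtype.mk.injEq]; norm_num)]

/-- The law of a single spin in the field `a`. -/
noncomputable def spinLaw (a : ℝ) (s : Spin) : ℝ :=
  Real.exp (a * s) / (2 * Real.cosh a)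

theorem spinLaw_nonneg (a : ℝ) (s : Spin) : 0 ≤ spinLaw a s :=
  div_nonneg (Real.exp_pos _).le (mul_pos two_pos (Real.cosh_pos a)).le

theorem sum_exp_mul_spin (a : ℝ) : ∑ s : Spin, Real.exp (a * s) = 2 * Real.cosh a := by
  rw [sum_spin, Real.cosh_eq]
  simp only [mul_neg, mul_one]
  ring

theorem sum_spinLaw (a : ℝ) : ∑ s : Spin, spinLaw a s = 1 := by
  have hc := Real.cosh_pos a
  simp only [spinLaw]
  rw [← Finset.sum_div, sum_exp_mul_spin, div_self (by positivity)]

theorem spinLaw_one (a : ℝ) : spinLaw a ⟨1, by simp⟩ = (1 + Real.tanh a) / 2 := by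
  have hc := Real.cosh_pos a
  simp only [spinLaw, mul_one]
  rw [Real.tanh_eq_sinh_div_cosh, ← Real.cosh_add_sinh]
  field_simp

/-- The maximal coupling of two laws on the two-point spin space. -/
noncomputable def spinCoupling (p q : Spin → ℝ) (s t : Spin) : ℝ :=
  if s = t then min (p s) (q s) else max (p s - q s) 0

theorem spinCoupling_nonneg {p q : Spin → ℝ} (hp : ∀ s, 0 ≤ p s) (hq : ∀ s, 0 ≤ q s)
    (s t : Spin) : 0 ≤ spinCoupling p q s t := by
  unfold spinCoupling
  split_ifs
  · exact le_min (hp s) (hq s)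
  · exact le_max_right _ _

theorem sum_spinCoupling_right (p q : Spin → ℝ) (s : Spin) :
    ∑ t, spinCoupling p q s t = p s := by
  have hpm : (-1 : ℝ) ≠ 1 := by norm_num
  rw [sum_spin]
  rcases spin_eq s with rfl | rfl <;> simp only [spinCoupling, Subtype.mk.injEq, hpm, hpm.symm,
    if_true, if_false] <;> grind

theorem sum_spinCoupling_left {p q : Spin → ℝ} (hpq : ∑ s, p s = ∑ s, q s) (t : Spin) :
    ∑ s, spinCoupling p q s t = q t := by
  have hpm : (-1 : ℝ) ≠ 1 := by norm_num
  rw [sum_spin, sum_spin] at hpq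
  rw [sum_spin]
  rcases spin_eq t with rfl | rfl <;> simp only [spinCoupling, Subtype.mk.injEq, hpm, hpm.symm,
    if_true, if_false] <;> grind

theorem sum_spinCoupling_ne {p q : Spin → ℝ} (hpq : ∑ s, p s = ∑ s, q s) :
    ∑ s, ∑ t, spinCoupling p q s t * (if (s : ℝ) ≠ (t : ℝ) then 1 else 0)
      = |p ⟨1, by simp⟩ - q ⟨1, by simp⟩| := by
  have hpm : (-1 : ℝ) ≠ 1 := by norm_num
  rw [sum_spin, sum_spin] at hpq
  simp only [sum_spin, spinCoupling, Subtype.mk.injEq, hpm, hpm.symm, ne_eq, not_true_eq_false,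
    not_false_eq_true, if_true, if_false, mul_zero, mul_one, add_zero, zero_add]
  grind

section Coupling

variable {V : Type*} [Fintype V]

theorem rhoTM_le_of_coupling [DecidableEq V] {μ ν : Conf V → ℝ} (γ : Conf V × Conf V → ℝ)
    (hγ : ∀ p, 0 ≤ γ p)
    (hμ : ∀ σ, ∑ τ : Conf V, γ (σ, τ) = μ σ) (hν : ∀ τ, ∑ σ : Conf V, γ (σ, τ) = ν τ) :
    rhoTM μ ν ≤ ∑ p : Conf V × Conf V, γ p * ((Dset p.1 p.2).card : ℝ) := by
  refine csInf_le ⟨0, ?_⟩ ⟨γ, hγ, hμ, hν, rfl⟩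
  rintro _ ⟨γ', hγ', -, -, rfl⟩
  exact Finset.sum_nonneg fun p _ => mul_nonneg (hγ' p) (Nat.cast_nonneg _)

theorem card_Dset (σ τ : Conf V) :
    ((Dset σ τ).card : ℝ) = ∑ x, if (σ x : ℝ) ≠ (τ x : ℝ) then (1 : ℝ) else 0 := by
  rw [Dset, Finset.card_filter, Nat.cast_sum]
  simp only [Nat.cast_ite, Nat.cast_one, Nat.cast_zero]

/-- The transportation distance of two product measures is at most the sum of the distances of
their factors. -/
theorem rhoTM_prod_le [DecidableEq V] {p q : V → Spin → ℝ} (hp : ∀ x s, 0 ≤ p x s)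
    (hq : ∀ x s, 0 ≤ q x s)
    (hp1 : ∀ x, ∑ s, p x s = 1) (hq1 : ∀ x, ∑ s, q x s = 1) :
    rhoTM (fun σ : Conf V => ∏ x, p x (σ x)) (fun σ => ∏ x, q x (σ x))
      ≤ ∑ x, |p x ⟨1, by simp⟩ - q x ⟨1, by simp⟩| := by
  have hpq : ∀ x, ∑ s, p x s = ∑ s, q x s := fun x => (hp1 x).trans (hq1 x).symm
  refine (rhoTM_le_of_coupling
    (fun w => ∏ x, spinCoupling (p x) (q x) (w.1 x) (w.2 x))
    (fun w => Finset.prod_nonneg fun x _ => spinCoupling_nonneg (hp x) (hq x) _ _)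
    (fun σ => ?_) (fun τ => ?_)).trans (le_of_eq ?_)
  · rw [Fintype.sum_pi_prod fun x t => spinCoupling (p x) (q x) (σ x) t]
    simp only [sum_spinCoupling_right]
  · rw [Fintype.sum_pi_prod fun x s => spinCoupling (p x) (q x) s (τ x)]
    simp only [sum_spinCoupling_left (hpq _)]
  · simp only [card_Dset, Finset.mul_sum]
    rw [Finset.sum_comm]
    refine Finset.sum_congr rfl fun x _ => ?_
    have hfactor : ∀ w : Conf V × Conf V,
        (∏ z, spinCoupling (p z) (q z) (w.1 z) (w.2 z)) *
            (if (w.1 x : ℝ) ≠ (w.2 x : ℝ) then (1 : ℝ) else 0)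
          = ∏ z, spinCoupling (p z) (q z) (w.1 z) (w.2 z) *
            (if z = x then (if (w.1 z : ℝ) ≠ (w.2 z : ℝ) then (1 : ℝ) else 0) else 1) := by
      intro w
      rw [Finset.prod_mul_distrib, Finset.prod_ite_eq' Finset.univ x, if_pos (Finset.mem_univ x)]
    rw [Finset.sum_congr rfl fun w _ => hfactor w,
      Fintype.sum_prod_pi_prod fun z s t => spinCoupling (p z) (q z) s t *
        (if z = x then (if (s : ℝ) ≠ (t : ℝ) then (1 : ℝ) else 0) else 1),
      Finset.prod_eq_single x]
    · simp only [if_true]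
      exact sum_spinCoupling_ne (hpq x)
    · intro z _ hz
      simp only [if_neg hz, mul_one, sum_spinCoupling_right, hp1]
    · exact fun hx => absurd (Finset.mem_univ x) hx

/-- The field acting on the updated spin at `x` when the current configuration is `σ`. -/
noncomputable def updateField (J : V → V → ℝ) (h q : V → ℝ) (β : ℝ) (σ : Conf V) (x : V) : ℝ :=
  β / 2 * (cavity J h σ x + q x * σ x)

theorem neg_mul_Htilde {J : V → V → ℝ} (hJsym : ∀ x y, J x y = J y x) (h q : V → ℝ) (β : ℝ)
    (σ τ : Conf V) :
    -β * Htilde J h q σ τ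
      = β / 2 * ∑ x, h x * (σ x : ℝ) + ∑ x, updateField J h q β σ x * (τ x : ℝ) := by
  have hswap : ∑ x, ∑ y, J x y * (σ x : ℝ) * (τ y : ℝ)
      = ∑ x, (∑ y, J x y * (σ y : ℝ)) * (τ x : ℝ) := by
    rw [Finset.sum_comm]
    refine Finset.sum_congr rfl fun x _ => ?_
    rw [Finset.sum_mul]
    exact Finset.sum_congr rfl fun y _ => by rw [hJsym y x]
  have hfield : ∑ x, updateField J h q β σ x * (τ x : ℝ)
      = β / 2 * (∑ x, (∑ y, J x y * (σ y : ℝ)) * (τ x : ℝ) + ∑ x, h x * (τ x : ℝ)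
        + ∑ x, q x * (σ x : ℝ) * (τ x : ℝ)) := by
    rw [← Finset.sum_add_distrib, ← Finset.sum_add_distrib, Finset.mul_sum]
    refine Finset.sum_congr rfl fun x _ => ?_
    rw [updateField, cavity]
    ring
  rw [hfield, Htilde, hswap]
  simp only [mul_add, Finset.sum_add_distrib]
  ring

/-- The one-step law of the SCA is a product measure. -/
theorem PSCA_eq_prod [DecidableEq V] {J : V → V → ℝ} (hJsym : ∀ x y, J x y = J y x)
    (h q : V → ℝ) (β : ℝ) (σ : Conf V) :
    PSCA J h q β σ = fun τ => ∏ x, spinLaw (updateField J h q β σ x) (τ x) := by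
  funext τ
  simp only [PSCA, wSCA, neg_mul_Htilde hJsym, Real.exp_add, Real.exp_sum, ← Finset.mul_sum]
  rw [mul_div_mul_left _ _ (Real.exp_pos _).ne',
    Fintype.sum_pi_prod fun x (s : Spin) => Real.exp (updateField J h q β σ x * (s : ℝ))]
  simp only [sum_exp_mul_spin, spinLaw, Finset.prod_div_distrib]

theorem abs_spin_sub_le (s t : Spin) :
    |(s : ℝ) - (t : ℝ)| ≤ 2 * if (s : ℝ) ≠ (t : ℝ) then 1 else 0 := by
  rcases spin_eq s with rfl | rfl <;> rcases spin_eq t with rfl | rfl <;> norm_num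

theorem abs_updateField_sub_le [DecidableEq V] (J : V → V → ℝ) (h : V → ℝ) {q : V → ℝ}
    (hq : ∀ x, 0 ≤ q x) {β : ℝ} (hβ : 0 ≤ β) (σ τ : Conf V) (x : V) :
    |updateField J h q β σ x - updateField J h q β τ x| / 2
      ≤ (∑ y ∈ Dset σ τ, β * |J x y| / 2) + if x ∈ Dset σ τ then β * q x / 2 else 0 := by
  have hsub : updateField J h q β σ x - updateField J h q β τ x
      = β / 2 * (∑ y, J x y * ((σ y : ℝ) - τ y) + q x * ((σ x : ℝ) - τ x)) := by
    simp only [updateField, cavity, mul_sub, Finset.sum_sub_distrib]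
    ring
  have hsum : |∑ y, J x y * ((σ y : ℝ) - τ y)|
      ≤ ∑ y, |J x y| * (2 * if (σ y : ℝ) ≠ (τ y : ℝ) then 1 else 0) := by
    refine (Finset.abs_sum_le_sum_abs _ _).trans (Finset.sum_le_sum fun y _ => ?_)
    rw [abs_mul]
    exact mul_le_mul_of_nonneg_left (abs_spin_sub_le _ _) (abs_nonneg _)
  have hpin : |q x * ((σ x : ℝ) - τ x)|
      ≤ q x * (2 * if (σ x : ℝ) ≠ (τ x : ℝ) then 1 else 0) := by
    rw [abs_mul, abs_of_nonneg (hq x)]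
    exact mul_le_mul_of_nonneg_left (abs_spin_sub_le _ _) (hq x)
  have hbound := mul_le_mul_of_nonneg_left
    ((abs_add_le _ _).trans (add_le_add hsum hpin)) (show 0 ≤ β / 2 / 2 by positivity)
  rw [hsub, abs_mul, abs_of_nonneg (show 0 ≤ β / 2 by positivity)]
  refine (le_of_eq (by ring)).trans (hbound.trans (le_of_eq ?_))
  simp only [Dset, Finset.sum_filter, Finset.mem_filter, Finset.mem_univ, true_and]
  rw [mul_add, Finset.mul_sum]
  congr 1
  · refine Finset.sum_congr rfl fun y _ => ?_
    split_ifs <;> ring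
  · split_ifs <;> ring

theorem abs_spinLaw_updateField_sub_le [DecidableEq V] (J : V → V → ℝ) (h : V → ℝ) {q : V → ℝ}
    (hq : ∀ x, 0 ≤ q x) {β : ℝ} (hβ : 0 ≤ β) (σ τ : Conf V) (x : V) :
    |spinLaw (updateField J h q β σ x) ⟨1, by simp⟩
        - spinLaw (updateField J h q β τ x) ⟨1, by simp⟩|
      ≤ (∑ y ∈ Dset σ τ, Real.tanh (β * |J x y| / 2))
        + if x ∈ Dset σ τ then Real.tanh (β * q x / 2) else 0 := by
  have hJ : ∀ y ∈ Dset σ τ, 0 ≤ β * |J x y| / 2 := fun y _ => by positivity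
  have hqx : 0 ≤ β * q x / 2 := by have := hq x; positivity
  have hpin : 0 ≤ if x ∈ Dset σ τ then β * q x / 2 else 0 := by split_ifs <;> simp [hqx]
  have hhalf : |spinLaw (updateField J h q β σ x) ⟨1, by simp⟩
        - spinLaw (updateField J h q β τ x) ⟨1, by simp⟩|
      = |Real.tanh (updateField J h q β σ x) - Real.tanh (updateField J h q β τ x)| / 2 := by
    rw [spinLaw_one, spinLaw_one, ← sub_div, abs_div, abs_two, add_sub_add_left_eq_sub]
  have hlip := Real.abs_tanh_sub_tanh_le (updateField J h q β σ x) (updateField J h q β τ x)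
  have hmono := Real.tanh_le_tanh_of_le (abs_updateField_sub_le J h hq hβ σ τ x)
  have hadd := Real.tanh_add_le (Finset.sum_nonneg hJ) hpin
  have hsum := Real.tanh_sum_le (Dset σ τ) (fun y => β * |J x y| / 2) hJ
  rw [apply_ite Real.tanh, Real.tanh_zero] at hadd
  rw [hhalf]
  linarith

end Coupling

/-- Theorem 2.1, contraction estimate: if
`r := max_x (tanh(βq_x/2) + Σ_y tanh(β|J_{x,y}|/2)) < 1`, then
`ρ_TM(P^SCA(σ,·), P^SCA(τ,·)) ≤ r |D_{σ,τ}|` for all `σ, τ`. -/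
theorem rhoTM_PSCA_le {V : Type*} [Fintype V] [DecidableEq V] [Nonempty V]
    (J : V → V → ℝ) (hJsym : ∀ x y, J x y = J y x) (hJdiag : ∀ x, J x x = 0)
    (h q : V → ℝ) (hq : ∀ x, 0 ≤ q x) (β : ℝ) (hβ : 0 ≤ β) (r : ℝ)
    (hr : r = Finset.univ.sup' Finset.univ_nonempty
      (fun x => Real.tanh (β * q x / 2) + ∑ y, Real.tanh (β * |J x y| / 2)))
    (hr1 : r < 1) :
    ∀ σ τ : Conf V,
      rhoTM (PSCA J h q β σ) (PSCA J h q β τ) ≤ r * ((Dset σ τ).card : ℝ) := by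
  intro σ τ
  rw [PSCA_eq_prod hJsym, PSCA_eq_prod hJsym]
  refine (rhoTM_prod_le (p := fun x => spinLaw (updateField J h q β σ x))
    (q := fun x => spinLaw (updateField J h q β τ x)) (fun _ _ => spinLaw_nonneg _ _)
    (fun _ _ => spinLaw_nonneg _ _) (fun _ => sum_spinLaw _) (fun _ => sum_spinLaw _)).trans ?_
  calc ∑ x, |spinLaw (updateField J h q β σ x) ⟨1, by simp⟩
          - spinLaw (updateField J h q β τ x) ⟨1, by simp⟩|
      ≤ ∑ x, ((∑ y ∈ Dset σ τ, Real.tanh (β * |J x y| / 2))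
        + if x ∈ Dset σ τ then Real.tanh (β * q x / 2) else 0) :=
        Finset.sum_le_sum fun x _ => abs_spinLaw_updateField_sub_le J h hq hβ σ τ x
    _ = ∑ y ∈ Dset σ τ,
          (Real.tanh (β * q y / 2) + ∑ x, Real.tanh (β * |J y x| / 2)) := by
        rw [Finset.sum_add_distrib, Finset.sum_comm, Finset.sum_ite_mem, Finset.univ_inter,
          ← Finset.sum_add_distrib]
        refine Finset.sum_congr rfl fun y _ => ?_
        rw [add_comm]
        simp only [hJsym y]
    _ ≤ ∑ y ∈ Dset σ τ, r := Finset.sum_le_sum fun y _ => by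
        rw [hr]
        exact Finset.le_sup' (fun x => Real.tanh (β * q x / 2)
          + ∑ y, Real.tanh (β * |J x y| / 2)) (Finset.mem_univ y)
    _ = r * ((Dset σ τ).card : ℝ) := by
        rw [Finset.sum_const, nsmul_eq_mul, mul_comm]
end

section
/- (SCA flips more spins than Glauber at high temperature) If β ≥ 0 satisfies max_{x∈V} (β/2)( q_x + |h_x| + Σ_{y∈V} |J_{x,y}| ) ≤ log√|V|, then for every σ ∈ Ω, Σ_{x∈V} 1/(e^{β(h̃_x(σ)σ_x + q_x)} + 1) ≥ (1/|V|) Σ_{x∈V} 1/(e^{2β h̃_x(σ)σ_x} + 1); that is, the expected number of spin flips per update of the SCA is at least that of the Glauber dynamics. -/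
open Real Finset

/-- If `-a + b ≤ log n` with `n ≥ 1`, a site flips under SCA with probability at least `1 / n`
times its heat-bath flip probability. -/
theorem inv_mul_glauber_rate_le_sca_rate {n a b : ℝ} (hn : 1 ≤ n) (hab : -a + b ≤ Real.log n) :
    1 / n * (1 / (Real.exp (2 * a) + 1)) ≤ 1 / (Real.exp (a + b) + 1) := by
  have hexp : Real.exp (a + b) ≤ n * Real.exp (2 * a) :=
    calc Real.exp (a + b) ≤ Real.exp (Real.log n + 2 * a) := Real.exp_le_exp.2 (by linarith)
      _ = n * Real.exp (2 * a) := by rw [Real.exp_add, Real.exp_log (by linarith)]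
  rw [one_div_mul_one_div]
  exact one_div_le_one_div_of_le (by positivity) (by linarith)

theorem abs_spin (s : ({-1, 1} : Finset ℝ)) : |(s : ℝ)| = 1 := by
  have hs := s.2
  simp only [Finset.mem_insert, Finset.mem_singleton] at hs
  rcases hs with h | h <;> simp [h]

theorem abs_cavity_le {V : Type*} [Fintype V] (J : V → V → ℝ) (h : V → ℝ) (σ : Conf V) (x : V) :
    |cavity J h σ x| ≤ |h x| + ∑ y, |J x y| :=
  calc |cavity J h σ x| ≤ |∑ y, J x y * (σ y : ℝ)| + |h x| := abs_add_le _ _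
    _ ≤ ∑ y, |J x y * (σ y : ℝ)| + |h x| := by gcongr; exact Finset.abs_sum_le_sum_abs _ _
    _ = |h x| + ∑ y, |J x y| := by simp only [abs_mul, abs_spin, mul_one, add_comm]

/-- SCA flips more spins than Glauber at high temperature: if
`max_x (β/2)(q_x + |h_x| + Σ_y |J_{x,y}|) ≤ log √|V|`, then the expected
number of spin flips per SCA update is at least that of the Glauber dynamics. -/
theorem sca_flips_ge_glauber {V : Type*} [Fintype V] [DecidableEq V] [Nonempty V]
    (J : V → V → ℝ) (hJsym : ∀ x y, J x y = J y x) (hJdiag : ∀ x, J x x = 0)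
    (h q : V → ℝ) (hq : ∀ x, 0 ≤ q x) (β : ℝ) (hβ : 0 ≤ β)
    (hhigh : ∀ x, β / 2 * (q x + |h x| + ∑ y, |J x y|)
      ≤ Real.log (Real.sqrt (Fintype.card V)))
    (σ : Conf V) :
    (1 / (Fintype.card V : ℝ))
        * ∑ x, 1 / (Real.exp (2 * β * cavity J h σ x * (σ x : ℝ)) + 1)
      ≤ ∑ x, 1 / (Real.exp (β * (cavity J h σ x * (σ x : ℝ) + q x)) + 1) := by
  have hn : (1 : ℝ) ≤ Fintype.card V := by exact_mod_cast Fintype.card_pos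
  rw [Finset.mul_sum]
  refine Finset.sum_le_sum fun x _ => ?_
  have hfield : -(cavity J h σ x * (σ x : ℝ)) ≤ |h x| + ∑ y, |J x y| :=
    calc -(cavity J h σ x * (σ x : ℝ)) ≤ |cavity J h σ x * (σ x : ℝ)| := neg_le_abs _
      _ = |cavity J h σ x| := by rw [abs_mul, abs_spin, mul_one]
      _ ≤ _ := abs_cavity_le J h σ x
  have hlog := hhigh x
  rw [Real.log_sqrt (by linarith)] at hlog
  have hab : -(β * (cavity J h σ x * (σ x : ℝ))) + β * q x ≤ Real.log (Fintype.card V) := by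
    linarith [mul_le_mul_of_nonneg_left hfield hβ]
  simpa only [mul_add, mul_assoc] using inv_mul_glauber_rate_le_sca_rate hn hab
end

section
/- (Sufficiency of the pinning condition for diagonal minimization) Let λ be the largest eigenvalue of the symmetric matrix [−J_{x,y}]_{x,y∈V}, let C ⊆ V be arbitrary, and suppose q_x ≥ Σ_{y∈V}|J_{x,y}| − (1/2)Σ_{y∈C}|J_{x,y}| for x ∈ C and q_x ≥ λ/2 for x ∉ C. Then min_{σ,τ∈Ω} H̃(σ,τ) = min_{σ∈Ω} H̃(σ,σ), and the set of configurations σ minimizing H̃(σ,σ) equals GS = argmin_σ H(σ). -/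
open Real Finset

/-- The Ising Hamiltonian extended to real-valued configurations. -/
noncomputable def relaxedHamil {V : Type*} [Fintype V] (J : V → V → ℝ) (h u : V → ℝ) : ℝ :=
  -(1/2) * ∑ x, ∑ y, J x y * u x * u y - ∑ x, h x * u x

/-- With symmetric couplings and no self-interaction, `relaxedHamil` is affine in each spin. -/
theorem relaxedHamil_update {V : Type*} [Fintype V] [DecidableEq V] (J : V → V → ℝ)
    (hJsym : ∀ x y, J x y = J y x) (hJdiag : ∀ x, J x x = 0) (h u : V → ℝ) (a : V) (t : ℝ) :
    relaxedHamil J h (Function.update u a t)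
      = relaxedHamil J h u - (t - u a) * ((∑ y, J a y * u y) + h a) := by
  have hupd : ∀ x, Function.update u a t x = u x + if x = a then t - u a else 0 := by
    intro x
    by_cases hx : x = a
    · subst hx; simp
    · simp [hx]
  have hcol : ∑ x, J x a * u x = ∑ y, J a y * u y :=
    Finset.sum_congr rfl fun x _ => by rw [hJsym]
  have hquad : ∑ x, ∑ y, J x y * Function.update u a t x * Function.update u a t y
      = (∑ x, ∑ y, J x y * u x * u y) + (t - u a) * (∑ y, J a y * u y)
        + (t - u a) * ∑ x, J x a * u x := by
    simp only [hupd, mul_add, add_mul, Finset.sum_add_distrib, mul_ite, ite_mul, mul_zero,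
      zero_mul, Finset.sum_ite_eq', Finset.mem_univ, if_true, Finset.mul_sum]
    rw [Finset.sum_comm (f := fun x y => if x = a then J x y * (t - u a) * u y else 0)]
    simp only [Finset.sum_ite_eq', Finset.mem_univ, if_true, hJdiag, zero_mul, add_zero]
    congr 1
    · congr 1
      exact Finset.sum_congr rfl fun x _ => by ring
    · exact Finset.sum_congr rfl fun x _ => by ring
  have hlin : ∑ x, h x * Function.update u a t x = (∑ x, h x * u x) + h a * (t - u a) := by
    simp [hupd, mul_add, Finset.sum_add_distrib]
  simp only [relaxedHamil]
  rw [hquad, hlin, hcol]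
  ring

/-- Any point of the cube `[-1,1]^V` can be rounded to a spin configuration without raising
the energy. -/
theorem exists_conf_relaxedHamil_le {V : Type*} [Fintype V] [DecidableEq V] (J : V → V → ℝ)
    (hJsym : ∀ x y, J x y = J y x) (hJdiag : ∀ x, J x x = 0) (h u : V → ℝ)
    (hu : ∀ x, |u x| ≤ 1) :
    ∃ η : Conf V, relaxedHamil J h (fun x => (η x : ℝ)) ≤ relaxedHamil J h u := by
  suffices key : ∀ (D : Finset V) (u : V → ℝ), (∀ x, |u x| ≤ 1) →
      (∀ x ∉ D, u x = -1 ∨ u x = 1) →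
      ∃ η : Conf V, relaxedHamil J h (fun x => (η x : ℝ)) ≤ relaxedHamil J h u from
    key Finset.univ u hu fun x hx => absurd (Finset.mem_univ x) hx
  intro D
  induction D using Finset.induction_on with
  | empty =>
    intro u _ hspin
    exact ⟨fun x => ⟨u x, by simpa using hspin x⟩, le_rfl⟩
  | insert a D _ ih =>
    intro u hu hspin
    obtain ⟨t, ht, hle⟩ : ∃ t : ℝ, (t = -1 ∨ t = 1) ∧
        relaxedHamil J h (Function.update u a t) ≤ relaxedHamil J h u := by
      obtain ⟨hlo, hhi⟩ := abs_le.mp (hu a)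
      rcases le_total 0 ((∑ y, J a y * u y) + h a) with hk | hk
      · refine ⟨1, Or.inr rfl, ?_⟩
        rw [relaxedHamil_update J hJsym hJdiag]
        nlinarith
      · refine ⟨-1, Or.inl rfl, ?_⟩
        rw [relaxedHamil_update J hJsym hJdiag]
        nlinarith
    obtain ⟨η, hη⟩ := ih (Function.update u a t)
      (fun x => by
        by_cases hx : x = a
        · subst hx; rcases ht with rfl | rfl <;> simp
        · simpa [hx] using hu x)
      (fun x hxD => by
        by_cases hx : x = a
        · subst hx; simpa using ht
        · simpa [hx] using hspin x (by simp [hx, hxD]))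
    exact ⟨η, hη.trans hle⟩

/-- Rayleigh bound: the quadratic form of a real Hermitian matrix is at most the largest
eigenvalue times the squared Euclidean norm. -/
theorem Matrix.IsHermitian.dotProduct_mulVec_le_iSup_eigenvalues {V : Type*} [Fintype V]
    [DecidableEq V] {A : Matrix V V ℝ} (hA : A.IsHermitian) (v : V → ℝ) :
    v ⬝ᵥ A.mulVec v ≤ (⨆ x, hA.eigenvalues x) * (v ⬝ᵥ v) := by
  open scoped MatrixOrder in
  have hle : A ≤ algebraMap ℝ (Matrix V V ℝ) (⨆ x, hA.eigenvalues x) := by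
    refine le_algebraMap_of_spectrum_le (fun r hr => ?_) hA
    rw [hA.spectrum_real_eq_range_eigenvalues] at hr
    obtain ⟨i, rfl⟩ := hr
    exact le_ciSup (Set.finite_range _).bddAbove i
  have hnonneg := (Matrix.le_iff.mp hle).dotProduct_mulVec_nonneg v
  simpa [Matrix.sub_mulVec, Algebra.algebraMap_eq_smul_one, Matrix.smul_mulVec,
    dotProduct_sub] using hnonneg

/-- Under the pinning condition, the coupling form on `{-1,0,1}`-valued vectors is dominated by
the pinning term. -/
theorem pinned_quadratic_form_nonneg {V : Type*} [Fintype V] [DecidableEq V]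
    (J : V → V → ℝ) (hJsym : ∀ x y, J x y = J y x) (q : V → ℝ) (lam : ℝ)
    (hlam : ∀ v : V → ℝ, -(lam * ∑ x, v x ^ 2) ≤ ∑ x, ∑ y, J x y * v x * v y)
    (C : Finset V)
    (hqC : ∀ x ∈ C, (∑ y, |J x y|) - (1/2) * ∑ y ∈ C, |J x y| ≤ q x)
    (hqnotC : ∀ x ∉ C, lam / 2 ≤ q x)
    (e : V → ℝ) (he : ∀ x, e x = -1 ∨ e x = 0 ∨ e x = 1) :
    0 ≤ (1/2) * (∑ x, ∑ y, J x y * e x * e y) + ∑ x, q x * e x ^ 2 := by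
  set b : V → ℝ := fun x => if x ∈ C then 0 else e x with hb
  set w : V → ℝ := fun x => if x ∈ C then e x ^ 2 else 0 with hw
  set c : V → ℝ := fun x => if x ∈ C then 1 else 0 with hc
  have hpoint : ∀ x y, J x y * b x * b y
      - (|J x y| * (w x * (1 - c y / 2)) + |J y x| * (w y * (1 - c x / 2)))
      ≤ J x y * e x * e y := by
    intro x y
    rw [hJsym y x]
    have h1 := neg_abs_le (J x y)
    have h2 := le_abs_self (J x y)
    have h3 := abs_nonneg (J x y)
    simp only [hb, hw, hc]
    rcases he x with hx | hx | hx <;> rcases he y with hy | hy | hy <;>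
      by_cases hxC : x ∈ C <;> by_cases hyC : y ∈ C <;>
      simp only [hx, hy, hxC, hyC, if_true, if_false] <;> linarith
  have hrow : ∑ x, ∑ y, |J x y| * (w x * (1 - c y / 2)) ≤ ∑ x, q x * w x := by
    refine Finset.sum_le_sum fun x _ => ?_
    have hfac : ∑ y, |J x y| * (w x * (1 - c y / 2))
        = ((∑ y, |J x y|) - (1/2) * ∑ y ∈ C, |J x y|) * w x := by
      have hC : ∑ y ∈ C, |J x y| = ∑ y, |J x y| * c y := by simp [hc]
      rw [hC, Finset.mul_sum, ← Finset.sum_sub_distrib, Finset.sum_mul]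
      exact Finset.sum_congr rfl fun y _ => by ring
    rw [hfac]
    by_cases hx : x ∈ C
    · exact mul_le_mul_of_nonneg_right (hqC x hx) (by simp [hw, hx, sq_nonneg])
    · simp [hw, hx]
  have hsum : (∑ x, ∑ y, J x y * b x * b y) - 2 * (∑ x, q x * w x)
      ≤ ∑ x, ∑ y, J x y * e x * e y := by
    have hle := Finset.sum_le_sum fun x (_ : x ∈ Finset.univ) =>
      Finset.sum_le_sum fun y (_ : y ∈ Finset.univ) => hpoint x y
    simp only [Finset.sum_sub_distrib, Finset.sum_add_distrib] at hle
    rw [Finset.sum_comm (f := fun x y => |J y x| * (w y * (1 - c x / 2)))] at hle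
    linarith
  have hout : lam / 2 * ∑ x, b x ^ 2 ≤ ∑ x, q x * b x ^ 2 := by
    rw [Finset.mul_sum]
    refine Finset.sum_le_sum fun x _ => ?_
    by_cases hx : x ∈ C
    · simp [hb, hx]
    · exact mul_le_mul_of_nonneg_right (hqnotC x hx) (sq_nonneg _)
  have hsplit : ∑ x, q x * e x ^ 2 = ∑ x, q x * w x + ∑ x, q x * b x ^ 2 := by
    rw [← Finset.sum_add_distrib]
    refine Finset.sum_congr rfl fun x _ => ?_
    by_cases hx : x ∈ C <;> simp [hb, hw, hx]
  have hray := hlam b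
  linarith

theorem conf_eq_neg_one_or_one {V : Type*} (σ : Conf V) (x : V) :
    (σ x : ℝ) = -1 ∨ (σ x : ℝ) = 1 := by
  have hx := (σ x).2
  simpa only [Finset.mem_insert, Finset.mem_singleton] using hx

theorem Htilde_self {V : Type*} [Fintype V] (J : V → V → ℝ) (h q : V → ℝ) (σ : Conf V) :
    Htilde J h q σ σ = Hamil J h σ - (1/2) * ∑ x, q x := by
  have hpin : ∑ x, q x * (σ x : ℝ) * (σ x : ℝ) = ∑ x, q x :=
    Finset.sum_congr rfl fun x _ => by
      rcases conf_eq_neg_one_or_one σ x with hx | hx <;> simp [hx]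
  have hfield : ∑ x, h x * ((σ x : ℝ) + (σ x : ℝ)) = 2 * ∑ x, h x * (σ x : ℝ) := by
    rw [Finset.mul_sum]
    exact Finset.sum_congr rfl fun x _ => by ring
  rw [Htilde, Hamil, hpin, hfield]
  ring

/-- The extended Hamiltonian in terms of the half-sum and the half-difference of its arguments. -/
theorem Htilde_eq_relaxedHamil {V : Type*} [Fintype V] (J : V → V → ℝ)
    (hJsym : ∀ x y, J x y = J y x) (h q : V → ℝ) (σ τ : Conf V) :
    Htilde J h q σ τ = relaxedHamil J h (fun x => ((σ x : ℝ) + τ x) / 2) - (1/2) * (∑ x, q x)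
      + ((1/2) * (∑ x, ∑ y, J x y * (((σ x : ℝ) - τ x) / 2) * (((σ y : ℝ) - τ y) / 2))
        + ∑ x, q x * (((σ x : ℝ) - τ x) / 2) ^ 2) := by
  have hswap : ∑ x, ∑ y, J x y * (σ x : ℝ) * (τ y : ℝ)
      = ∑ x, ∑ y, J x y * (τ x : ℝ) * (σ y : ℝ) := by
    rw [Finset.sum_comm]
    exact Finset.sum_congr rfl fun x _ => Finset.sum_congr rfl fun y _ => by
      rw [hJsym y x]; ring
  have hquad : (∑ x, ∑ y, J x y * (((σ x : ℝ) + τ x) / 2) * (((σ y : ℝ) + τ y) / 2))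
      - ∑ x, ∑ y, J x y * (((σ x : ℝ) - τ x) / 2) * (((σ y : ℝ) - τ y) / 2)
      = (1/2) * (∑ x, ∑ y, J x y * (σ x : ℝ) * (τ y : ℝ))
        + (1/2) * ∑ x, ∑ y, J x y * (τ x : ℝ) * (σ y : ℝ) := by
    simp only [Finset.mul_sum, ← Finset.sum_sub_distrib, ← Finset.sum_add_distrib]
    exact Finset.sum_congr rfl fun x _ => Finset.sum_congr rfl fun y _ => by ring
  have hfield : ∑ x, h x * ((σ x : ℝ) + τ x) = 2 * ∑ x, h x * (((σ x : ℝ) + τ x) / 2) := by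
    rw [Finset.mul_sum]
    exact Finset.sum_congr rfl fun x _ => by ring
  have hpin : ∑ x, q x * (σ x : ℝ) * (τ x : ℝ)
      = (∑ x, q x) - 2 * ∑ x, q x * (((σ x : ℝ) - τ x) / 2) ^ 2 := by
    rw [Finset.mul_sum, ← Finset.sum_sub_distrib]
    refine Finset.sum_congr rfl fun x _ => ?_
    rcases conf_eq_neg_one_or_one σ x with hx | hx <;>
      rcases conf_eq_neg_one_or_one τ x with hy | hy <;> rw [hx, hy] <;> ring
  rw [← hswap] at hquad
  rw [Htilde, relaxedHamil, hfield, hpin]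
  linarith

/-- sufficiency of the pinning condition for diagonal
minimization: under the pinning condition with set `C` and largest eigenvalue
`lam` of `[-J]`, the extended Hamiltonian attains its minimum on the diagonal,
and the diagonal minimizers are exactly the ground states of `H`. -/
theorem pinning_condition_diag_min {V : Type*} [Fintype V] [DecidableEq V] [Nonempty V]
    (J : V → V → ℝ) (hJsym : ∀ x y, J x y = J y x) (hJdiag : ∀ x, J x x = 0)
    (h q : V → ℝ) (hq : ∀ x, 0 ≤ q x) (lam : ℝ)
    (hherm : (Matrix.of fun x y => -J x y).IsHermitian)
    (hlam : lam = ⨆ x, hherm.eigenvalues x)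
    (C : Finset V)
    (hqC : ∀ x ∈ C, (∑ y, |J x y|) - (1/2) * ∑ y ∈ C, |J x y| ≤ q x)
    (hqnotC : ∀ x ∉ C, lam / 2 ≤ q x) :
    (∀ σ τ : Conf V, ∃ η : Conf V, Htilde J h q η η ≤ Htilde J h q σ τ) ∧
    (∀ σ : Conf V,
      (∀ τ : Conf V, Htilde J h q σ σ ≤ Htilde J h q τ τ)
        ↔ (∀ τ : Conf V, Hamil J h σ ≤ Hamil J h τ)) := by
  refine ⟨fun σ τ => ?_, fun σ => by simp only [Htilde_self, sub_le_sub_iff_right]⟩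
  obtain ⟨η, hη⟩ := exists_conf_relaxedHamil_le J hJsym hJdiag h
    (fun x => ((σ x : ℝ) + τ x) / 2) fun x => by
      rcases conf_eq_neg_one_or_one σ x with hx | hx <;>
        rcases conf_eq_neg_one_or_one τ x with hy | hy <;> rw [hx, hy] <;> norm_num
  have hray : ∀ v : V → ℝ, -(lam * ∑ x, v x ^ 2) ≤ ∑ x, ∑ y, J x y * v x * v y := by
    intro v
    have hform : v ⬝ᵥ (Matrix.of fun x y => -J x y).mulVec v
        = -∑ x, ∑ y, J x y * v x * v y := by
      simp only [dotProduct, Matrix.mulVec, Matrix.of_apply, Finset.mul_sum,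
        ← Finset.sum_neg_distrib]
      exact Finset.sum_congr rfl fun x _ => Finset.sum_congr rfl fun y _ => by ring
    have hnorm : v ⬝ᵥ v = ∑ x, v x ^ 2 := by simp only [dotProduct, sq]
    have hle := hherm.dotProduct_mulVec_le_iSup_eigenvalues v
    rw [hform, hnorm, ← hlam] at hle
    linarith
  have hpinned := pinned_quadratic_form_nonneg J hJsym q lam hray C hqC hqnotC
    (fun x => ((σ x : ℝ) - τ x) / 2) fun x => by
      rcases conf_eq_neg_one_or_one σ x with hx | hx <;>
        rcases conf_eq_neg_one_or_one τ x with hy | hy <;> rw [hx, hy] <;> norm_num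
  refine ⟨η, ?_⟩
  rw [Htilde_self, Htilde_eq_relaxedHamil J hJsym]
  simp only [Hamil, relaxedHamil] at hη hpinned ⊢
  linarith
end

section
/- (Summability of successive equilibrium differences) Suppose the pinning parameters satisfy min_{σ,τ∈Ω} H̃(σ,τ) = min_{σ∈Ω} H̃(σ,σ) with {σ : H̃(σ,σ) minimal} = GS. Then for any non-decreasing sequence β_t with β_t → ∞, Σ_{t=1}^∞ ||π^SCA_{β_{t+1},q} − π^SCA_{β_t,q}||_TV < ∞. -/
open Real Finset

open scoped Classical in
/-- The set of ground states `GS = argmin H`. -/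
noncomputable def GS {V : Type*} [Fintype V] [DecidableEq V]
    (J : V → V → ℝ) (h : V → ℝ) : Finset (Conf V) :=
  Finset.univ.filter fun σ => ∀ τ : Conf V, Hamil J h σ ≤ Hamil J h τ

/-- The uniform distribution `π^G_∞` over the ground states. -/
noncomputable def piGinf {V : Type*} [Fintype V] [DecidableEq V]
    (J : V → V → ℝ) (h : V → ℝ) (σ : Conf V) : ℝ :=
  (if σ ∈ GS J h then 1 else 0) / ((GS J h).card : ℝ)

/-- If `A ≥ 1` is non-decreasing and `B ≥ 0` is non-increasing, then the successive differences of
`1 / (A + B)` are absolutely summable. -/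
theorem summable_abs_inv_add_succ_sub {A B : ℕ → ℝ} (hA : Monotone A) (hA_one : ∀ t, 1 ≤ A t)
    (hB : Antitone B) (hB_nonneg : ∀ t, 0 ≤ B t) :
    Summable fun t => |(A (t + 1) + B (t + 1))⁻¹ - (A t + B t)⁻¹| := by
  have step : ∀ t, |(A (t + 1) + B (t + 1))⁻¹ - (A t + B t)⁻¹| ≤
      ((A t)⁻¹ + B t) - ((A (t + 1))⁻¹ + B (t + 1)) := by
    intro t
    have hAle := hA (Nat.le_succ t)
    have hBle := hB (Nat.le_succ t)
    have a_one := hA_one t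
    have c_one := hA_one (t + 1)
    have b_nonneg := hB_nonneg t
    have d_nonneg := hB_nonneg (t + 1)
    simp only [Nat.succ_eq_add_one] at hAle hBle
    generalize A t = a, A (t + 1) = c, B t = b, B (t + 1) = d at *
    have hprod : a * c ≤ (c + d) * (a + b) := by nlinarith
    have hprod_one : 1 ≤ (c + d) * (a + b) := by nlinarith
    have hpos : 0 < (c + d) * (a + b) := by linarith
    have hdiff : (c + d)⁻¹ - (a + b)⁻¹ =
        (b - d) / ((c + d) * (a + b)) - (c - a) / ((c + d) * (a + b)) := by
      have : c + d ≠ 0 := by linarith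
      have : a + b ≠ 0 := by linarith
      field_simp
      ring
    have hAdiff : (c - a) / ((c + d) * (a + b)) ≤ a⁻¹ - c⁻¹ := by
      rw [inv_sub_inv (by linarith) (by linarith)]
      exact div_le_div_of_nonneg_left (by linarith) (by nlinarith) hprod
    have hBdiff : (b - d) / ((c + d) * (a + b)) ≤ b - d :=
      div_le_self (by linarith) hprod_one
    have hA0 : 0 ≤ (c - a) / ((c + d) * (a + b)) := div_nonneg (by linarith) hpos.le
    have hB0 : 0 ≤ (b - d) / ((c + d) * (a + b)) := div_nonneg (by linarith) hpos.le
    rw [hdiff, abs_le]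
    constructor <;> linarith
  refine summable_of_sum_range_le (c := (A 0)⁻¹ + B 0) (fun _ => abs_nonneg _) fun n => ?_
  calc ∑ t ∈ range n, |(A (t + 1) + B (t + 1))⁻¹ - (A t + B t)⁻¹|
      ≤ ∑ t ∈ range n, (((A t)⁻¹ + B t) - ((A (t + 1))⁻¹ + B (t + 1))) :=
        sum_le_sum fun t _ => step t
    _ = ((A 0)⁻¹ + B 0) - ((A n)⁻¹ + B n) := sum_range_sub' (fun t => (A t)⁻¹ + B t) n
    _ ≤ (A 0)⁻¹ + B 0 := by
        have : 0 ≤ (A n)⁻¹ := inv_nonneg.2 (zero_le_one.trans (hA_one n))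
        linarith [hB_nonneg n]

/-- Along a non-decreasing sequence of inverse temperatures, each Gibbs probability on a finite
state space has bounded variation. -/
theorem summable_abs_gibbs_succ_sub {ι : Type*} [Fintype ι] (E : ι → ℝ) {β : ℕ → ℝ}
    (hβ : Monotone β) (a : ι) :
    Summable fun t => |exp (-β (t + 1) * E a) / ∑ b, exp (-β (t + 1) * E b) -
      exp (-β t * E a) / ∑ b, exp (-β t * E b)| := by
  classical
  have hsplit : ∀ t, exp (-β t * E a) / ∑ b, exp (-β t * E b) =
      (∑ b with E b ≤ E a, exp (β t * (E a - E b)) +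
        ∑ b with ¬ E b ≤ E a, exp (β t * (E a - E b)))⁻¹ := by
    intro t
    rw [sum_filter_add_sum_filter_not, ← inv_div, sum_div]
    congr 1
    refine sum_congr rfl fun b _ => ?_
    rw [← exp_sub]
    ring_nf
  simp only [hsplit]
  refine summable_abs_inv_add_succ_sub
    (A := fun t => ∑ b with E b ≤ E a, exp (β t * (E a - E b)))
    (B := fun t => ∑ b with ¬ E b ≤ E a, exp (β t * (E a - E b)))
    (fun s t hst => sum_le_sum fun b hb => ?_) (fun t => ?_)
    (fun s t hst => sum_le_sum fun b hb => ?_) (fun t => sum_nonneg fun b _ => (exp_pos _).le)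
  · exact exp_le_exp.2 (mul_le_mul_of_nonneg_right (hβ hst) (sub_nonneg.2 (mem_filter.1 hb).2))
  · have := single_le_sum (f := fun b => exp (β t * (E a - E b))) (s := {b | E b ≤ E a})
      (fun b _ => (exp_pos _).le) (mem_filter.2 ⟨mem_univ a, le_refl (E a)⟩)
    simpa using this
  · exact exp_le_exp.2 (mul_le_mul_of_nonpos_right (hβ hst)
      (sub_nonpos.2 (not_le.1 (mem_filter.1 hb).2).le))

/-- The SCA equilibrium is the first marginal of the Gibbs distribution of `Htilde` on pairs. -/
theorem piSCA_eq_sum_gibbs {V : Type*} [Fintype V] [DecidableEq V] (J : V → V → ℝ)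
    (h q : V → ℝ) (β : ℝ) (σ : Conf V) :
    piSCA J h q β σ = ∑ τ : Conf V, exp (-β * Htilde J h q σ τ) /
      ∑ p : Conf V × Conf V, exp (-β * Htilde J h q p.1 p.2) := by
  simp only [piSCA, wSCA, Fintype.sum_prod_type, sum_div]

/-- summability of successive equilibrium differences: under the
pinning condition, for any non-decreasing `β_t → ∞`,
`Σ_t ‖π^SCA_{β_{t+1},q} − π^SCA_{β_t,q}‖_TV < ∞`. -/
theorem summable_tvDist_piSCA_succ {V : Type*} [Fintype V] [DecidableEq V]
    (J : V → V → ℝ) (hJsym : ∀ x y, J x y = J y x) (hJdiag : ∀ x, J x x = 0)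
    (h q : V → ℝ) (hq : ∀ x, 0 ≤ q x)
    (hmin : ∀ σ τ : Conf V, ∃ η : Conf V, Htilde J h q η η ≤ Htilde J h q σ τ)
    (hGS : ∀ σ : Conf V,
      (∀ τ η : Conf V, Htilde J h q σ σ ≤ Htilde J h q τ η) ↔ σ ∈ GS J h)
    (βseq : ℕ → ℝ) (hmono : Monotone βseq)
    (hβtop : Filter.Tendsto βseq Filter.atTop Filter.atTop) :
    Summable (fun t : ℕ =>
      tvDist (piSCA J h q (βseq (t + 1))) (piSCA J h q (βseq t))) := by
  refine Summable.mul_left _ (summable_sum fun σ _ => ?_)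
  refine Summable.of_nonneg_of_le (fun _ => abs_nonneg _) (fun t => ?_)
    (summable_sum (s := univ) fun (τ : Conf V) _ =>
      summable_abs_gibbs_succ_sub (fun p : Conf V × Conf V => Htilde J h q p.1 p.2) hmono (σ, τ))
  rw [piSCA_eq_sum_gibbs, piSCA_eq_sum_gibbs, ← sum_sub_distrib]
  exact abs_sum_le_sum_abs _ _
end

section
/- (ε-closeness in the order-preserving sense) Let R_H = max_{σ,τ∈Ω} |H(σ) − H(τ)| and fix ε ∈ (0,1). If for every x ∈ V, q_x ≥ |h_x| + Σ_{y∈V}|J_{x,y}| + (1/β) log( 2|V|(|h_x| + Σ_{y∈V}|J_{x,y}|) / (ε R_H) ), then π^SCA_{β,q} is ε-close to the Gibbs distribution π^G_β in the order-preserving sense: for all σ, τ ∈ Ω, π^SCA_{β,q}(σ) ≥ π^SCA_{β,q}(τ) implies H(σ) ≤ H(τ) + ε R_H. -/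
open Real Finset

theorem spin_eq_s19 (s : ({-1, 1} : Finset ℝ)) : (s : ℝ) = -1 ∨ (s : ℝ) = 1 := by
  simpa only [Finset.mem_insert, Finset.mem_singleton] using s.2

/-- The SCA weight factorizes over the vertices because `H̃(σ,·)` is affine in each spin. -/
theorem wSCA_eq_prod {V : Type*} [Fintype V] [DecidableEq V]
    (J : V → V → ℝ) (hJsym : ∀ x y, J x y = J y x) (h q : V → ℝ) (β : ℝ) (σ : Conf V) :
    wSCA J h q β σ = Real.exp (β / 2 * ∑ x, h x * (σ x : ℝ)) *
      ∏ x, ∑ s : ({-1, 1} : Finset ℝ),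
        Real.exp (β / 2 * ((s : ℝ) * (cavity J h σ x + q x * (σ x : ℝ)))) := by
  rw [Finset.prod_univ_sum, Fintype.piFinset_univ, Finset.mul_sum, wSCA]
  refine Finset.sum_congr rfl fun τ _ => ?_
  rw [← Real.exp_sum, ← Real.exp_add]
  congr 1
  have hcomm : ∑ x, ∑ y, J x y * (σ x : ℝ) * (τ y : ℝ)
      = ∑ x, (τ x : ℝ) * ∑ y, J x y * (σ y : ℝ) := by
    rw [Finset.sum_comm]
    refine Finset.sum_congr rfl fun y _ => ?_
    rw [Finset.mul_sum]
    refine Finset.sum_congr rfl fun x _ => ?_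
    rw [hJsym x y]
    ring
  rw [Htilde, hcomm, ← Finset.mul_sum]
  simp only [cavity, mul_add, Finset.sum_add_distrib]
  have hh : ∑ x, (τ x : ℝ) * h x = ∑ x, h x * (τ x : ℝ) :=
    Finset.sum_congr rfl fun x _ => mul_comm _ _
  have hq : ∑ x, (τ x : ℝ) * (q x * (σ x : ℝ)) = ∑ x, q x * (σ x : ℝ) * (τ x : ℝ) :=
    Finset.sum_congr rfl fun x _ => mul_comm _ _
  rw [hh, hq]
  ring

theorem sum_exp_spin_mul (β a b : ℝ) (s₀ : ({-1, 1} : Finset ℝ)) :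
    ∑ s : ({-1, 1} : Finset ℝ), Real.exp (β / 2 * ((s : ℝ) * (a + b * (s₀ : ℝ))))
      = Real.exp (β / 2 * ((s₀ : ℝ) * a + b)) *
        (1 + Real.exp (-(β * (b + (s₀ : ℝ) * a)))) := by
  rw [Finset.sum_coe_sort ({-1, 1} : Finset ℝ)
    (fun s => Real.exp (β / 2 * (s * (a + b * (s₀ : ℝ))))),
    Finset.sum_pair (by norm_num), mul_add (Real.exp _), ← Real.exp_add, mul_one]
  rcases spin_eq_s19 s₀ with hs | hs
  · rw [hs]
    congr 2 <;> ring
  · rw [hs, add_comm]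
    congr 2 <;> ring

theorem Hamil_eq_cavity {V : Type*} [Fintype V] (J : V → V → ℝ) (h : V → ℝ) (σ : Conf V) :
    Hamil J h σ = -(1 / 2) * ∑ x, (σ x : ℝ) * cavity J h σ x
      - (1 / 2) * ∑ x, h x * (σ x : ℝ) := by
  have hJ : ∑ x, ∑ y, J x y * (σ x : ℝ) * (σ y : ℝ)
      = ∑ x, (σ x : ℝ) * ∑ y, J x y * (σ y : ℝ) := by
    refine Finset.sum_congr rfl fun x _ => ?_
    rw [Finset.mul_sum]
    exact Finset.sum_congr rfl fun y _ => by ring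
  have hh : ∑ x, (σ x : ℝ) * h x = ∑ x, h x * (σ x : ℝ) :=
    Finset.sum_congr rfl fun x _ => mul_comm _ _
  simp only [Hamil, cavity, mul_add, Finset.sum_add_distrib]
  rw [hJ, hh]
  ring

/-- The SCA weight is the Gibbs weight times a product of corrections close to `1`. -/
theorem wSCA_eq_gibbs_mul_prod {V : Type*} [Fintype V] [DecidableEq V]
    (J : V → V → ℝ) (hJsym : ∀ x y, J x y = J y x) (h q : V → ℝ) (β : ℝ) (σ : Conf V) :
    wSCA J h q β σ = Real.exp (β / 2 * ∑ x, q x) * Real.exp (-β * Hamil J h σ) *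
      ∏ x, (1 + Real.exp (-(β * (q x + (σ x : ℝ) * cavity J h σ x)))) := by
  simp only [wSCA_eq_prod J hJsym, sum_exp_spin_mul, Finset.prod_mul_distrib]
  rw [← mul_assoc, ← Real.exp_sum, ← Real.exp_add, ← Real.exp_add, Hamil_eq_cavity]
  congr 2
  rw [← Finset.mul_sum, Finset.sum_add_distrib]
  ring

theorem abs_spin_mul_cavity_le {V : Type*} [Fintype V] (J : V → V → ℝ) (h : V → ℝ)
    (σ : Conf V) (x : V) :
    |(σ x : ℝ) * cavity J h σ x| ≤ |h x| + ∑ y, |J x y| := by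
  rw [abs_mul, abs_spin, one_mul, cavity, add_comm]
  refine (abs_add_le _ _).trans (add_le_add_right ?_ _)
  refine (Finset.abs_sum_le_sum_abs _ _).trans (Finset.sum_le_sum fun y _ => ?_)
  rw [abs_mul, abs_spin, mul_one]

/-- Convexity bound for the exponential on two points at least `m`. -/
theorem exp_neg_sub_exp_neg_le {s t m d : ℝ} (hm : m ≤ s) (hd : t - s ≤ d) (hd₀ : 0 ≤ d) :
    Real.exp (-s) - Real.exp (-t) ≤ Real.exp (-m) * d := by
  have hts : Real.exp (-t) = Real.exp (-s) * Real.exp (-(t - s)) := by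
    rw [← Real.exp_add]
    congr 1
    ring
  have hexp := Real.add_one_le_exp (-(t - s))
  calc Real.exp (-s) - Real.exp (-t) = Real.exp (-s) * (1 - Real.exp (-(t - s))) := by
        rw [hts]
        ring
    _ ≤ Real.exp (-s) * d := mul_le_mul_of_nonneg_left (by linarith) (Real.exp_pos _).le
    _ ≤ Real.exp (-m) * d := mul_le_mul_of_nonneg_right (Real.exp_le_exp.2 (by linarith)) hd₀

theorem one_add_le_one_add_mul_exp {u v c : ℝ} (hv : 0 ≤ v) (hc : 0 ≤ c) (huv : u - v ≤ c) :
    1 + u ≤ (1 + v) * Real.exp c := by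
  have hexp := mul_le_mul_of_nonneg_left (Real.add_one_le_exp c) (by linarith : 0 ≤ 1 + v)
  nlinarith [mul_nonneg hv hc]

theorem two_mul_mul_exp_neg_le_of_log_le {β K q n r : ℝ} (hβ : 0 < β) (hK : 0 ≤ K)
    (hn : 0 < n) (hr : 0 < r) (hpin : K + 1 / β * Real.log (2 * n * K / r) ≤ q) :
    2 * K * Real.exp (-(β * (q - K))) ≤ r / n := by
  rcases hK.eq_or_lt with rfl | hK
  · simp only [mul_zero, zero_mul]
    positivity
  have hlog : Real.log (2 * n * K / r) ≤ β * (q - K) := by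
    have hmul := mul_le_mul_of_nonneg_left hpin hβ.le
    have hcancel : β * (K + 1 / β * Real.log (2 * n * K / r))
        = β * K + Real.log (2 * n * K / r) := by
      field_simp
    rw [hcancel] at hmul
    linarith
  have hle := (Real.log_le_iff_le_exp (by positivity)).1 hlog
  rw [div_le_iff₀ hr] at hle
  rw [Real.exp_neg, ← div_eq_mul_inv, div_le_div_iff₀ (Real.exp_pos _) hn]
  linarith

/-- ε-closeness in the order-preserving sense: if the pinning
parameters satisfy the stated lower bound, then `π^SCA_{β,q}` is `ε`-close to
the Gibbs distribution in the order-preserving sense. -/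
theorem piSCA_order_preserving_close {V : Type*} [Fintype V] [DecidableEq V] [Nonempty V]
    (J : V → V → ℝ) (hJsym : ∀ x y, J x y = J y x) (hJdiag : ∀ x, J x x = 0)
    (h q : V → ℝ) (hq : ∀ x, 0 ≤ q x) (β : ℝ) (hβ : 0 < β)
    (ε : ℝ) (hε : ε ∈ Set.Ioo (0 : ℝ) 1) (RH : ℝ)
    (hRH : RH = Finset.univ.sup' Finset.univ_nonempty
      (fun p : Conf V × Conf V => |Hamil J h p.1 - Hamil J h p.2|))
    (hRHpos : 0 < RH)
    (hpin : ∀ x, |h x| + (∑ y, |J x y|)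
        + (1 / β) * Real.log (2 * (Fintype.card V : ℝ)
            * (|h x| + ∑ y, |J x y|) / (ε * RH))
      ≤ q x) :
    ∀ σ τ : Conf V, piSCA J h q β τ ≤ piSCA J h q β σ →
      Hamil J h σ ≤ Hamil J h τ + ε * RH := by
  intro σ τ hπ
  have hr : 0 < ε * RH := mul_pos hε.1 hRHpos
  have hn : (0 : ℝ) < Fintype.card V := by exact_mod_cast Fintype.card_pos
  have hw_pos : ∀ ρ, 0 < wSCA J h q β ρ := fun ρ =>
    Finset.sum_pos (fun _ _ => Real.exp_pos _) Finset.univ_nonempty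
  have hw : wSCA J h q β τ ≤ wSCA J h q β σ :=
    (div_le_div_iff_of_pos_right
      (Finset.sum_pos (fun ρ _ => hw_pos ρ) Finset.univ_nonempty)).1 hπ
  have hfactor : ∀ x, 1 + Real.exp (-(β * (q x + (σ x : ℝ) * cavity J h σ x)))
      ≤ (1 + Real.exp (-(β * (q x + (τ x : ℝ) * cavity J h τ x))))
        * Real.exp (β * (ε * RH / Fintype.card V)) := by
    intro x
    have hσ := abs_le.1 (abs_spin_mul_cavity_le J h σ x)
    have hτ := abs_le.1 (abs_spin_mul_cavity_le J h τ x)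
    have hK : 0 ≤ |h x| + ∑ y, |J x y| := by positivity
    have hsmall := two_mul_mul_exp_neg_le_of_log_le hβ hK hn hr (hpin x)
    set K := |h x| + ∑ y, |J x y|
    refine one_add_le_one_add_mul_exp (Real.exp_pos _).le (by positivity) ?_
    refine (exp_neg_sub_exp_neg_le (m := β * (q x - K)) (d := β * (2 * K)) ?_ ?_
      (by positivity)).trans ?_
    · exact mul_le_mul_of_nonneg_left (by linarith) hβ.le
    · rw [← mul_sub]
      exact mul_le_mul_of_nonneg_left (by linarith) hβ.le
    · have hmul := mul_le_mul_of_nonneg_left hsmall hβ.le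
      linarith
  have hprod := Finset.prod_le_prod (s := Finset.univ)
    (fun x _ => (by positivity :
      0 ≤ 1 + Real.exp (-(β * (q x + (σ x : ℝ) * cavity J h σ x)))))
    (fun x _ => hfactor x)
  rw [Finset.prod_mul_distrib, Finset.prod_const, Finset.card_univ, ← Real.exp_nat_mul,
    (by field_simp : (Fintype.card V : ℝ) * (β * (ε * RH / Fintype.card V)) = β * (ε * RH))]
    at hprod
  rw [wSCA_eq_gibbs_mul_prod J hJsym, wSCA_eq_gibbs_mul_prod J hJsym, mul_assoc, mul_assoc,
    mul_le_mul_iff_right₀ (Real.exp_pos _)] at hw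
  have hP : 0 < ∏ x, (1 + Real.exp (-(β * (q x + (τ x : ℝ) * cavity J h τ x)))) :=
    Finset.prod_pos fun x _ => by positivity
  have hle := hw.trans (mul_le_mul_of_nonneg_left hprod (Real.exp_pos _).le)
  rw [mul_left_comm, mul_comm (Real.exp _), mul_le_mul_iff_right₀ hP, ← Real.exp_add,
    Real.exp_le_exp] at hle
  refine le_of_mul_le_mul_left ?_ hβ
  linarith
end
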